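/- (Lemma 4.3, energy estimate for the relaxation–transport half steps.) Let 0 < ε < 1, λ > 0, Δt > 0, and let k and N_v be natural numbers. Let rⁿ* (denoted r*), jⁿ, j*, and r^{n+1} be functions Ω_x × ℝ → ℝ of discrete ansatz form satisfying, for every v ∈ ℝ: (i) ((j*(·,v) − jⁿ(·,v))/Δt, η) = −(λ/ε²)(j*(·,v), η) − ((1−ε²)/ε²) · v · L⁺(r*(·,v), η) for all η ∈ V_h^k, and (ii) ((r^{n+1}(·,v) − r*(·,v))/Δt, ξ) + v · L⁻(j*(·,v), ξ) = 0 for all ξ ∈ V_h^k. Then there exist positive constants C_i and C_t, depending only on k (and independent of h, Δt, ε, λ, N_v and the data), such that whenever the CFL condition Δt/h² ≤ λ/((1−ε²)(C_i + 4C_t²)(2N_v+1)) holds, one has |||r^{n+1}|||² + (ε²/(1−ε²)) |||j*|||² ≤ |||r*|||² + (ε²/(1−ε²)) |||jⁿ|||². -/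

import Mathlib

noncomputable section

open Polynomial MeasureTheory

namespace APDG

/-- Mesh size `h = 1/N` of the uniform partition of `Ω_x = [0,1]` into `N` cells. -/
def msize (N : ℕ) : ℝ := 1 / N

/-- A piecewise-polynomial function on the uniform mesh of `[0,1]` with `N` cells, recorded
by its polynomial on each cell `I_i = [i·h, (i+1)·h]` (indexed by `i : Fin N`). -/
abbrev PW (N : ℕ) := Fin N → Polynomial ℝ

/-- Membership in `V_h^k`: on each cell the polynomial has degree at most `k`. -/
def degLE (k : ℕ) {N : ℕ} (u : PW N) : Prop := ∀ i, (u i).degree ≤ (k : ℕ)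

/-- The one-sided limit `u⁺_{i-1/2}` from cell `I_i` at the interface `x_{i-1/2} = i·h`. -/
def uplus {N : ℕ} (u : PW N) (i : Fin N) : ℝ := (u i).eval ((i.val : ℝ) * msize N)

/-- The index `i - 1` modulo `N` (periodic boundary conditions). -/
def prevIdx {N : ℕ} (i : Fin N) : Fin N := ⟨(i.val + (N - 1)) % N, Nat.mod_lt _ i.pos⟩

/-- The one-sided limit `u⁻_{i-1/2}` from cell `I_{i-1}` at the interface `x_{i-1/2}`,
with periodic identification of cell indices modulo `N` (so for `i = 0` it is the value of
the polynomial of the last cell at the right endpoint `1`). -/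
def uminus {N : ℕ} (u : PW N) (i : Fin N) : ℝ :=
  (u (prevIdx i)).eval ((((prevIdx i).val : ℝ) + 1) * msize N)

/-- The jump `[u]_{i-1/2} = u⁺_{i-1/2} − u⁻_{i-1/2}`. -/
def jump {N : ℕ} (u : PW N) (i : Fin N) : ℝ := uplus u i - uminus u i

/-- The `L²(Ω_x)` inner product `(u,w) = ∫_{Ω_x} u w dx`, computed cell by cell. -/
def inner2 {N : ℕ} (u w : PW N) : ℝ :=
  ∑ i : Fin N,
    ∫ x in ((i.val : ℝ) * msize N)..(((i.val : ℝ) + 1) * msize N), (u i).eval x * (w i).eval x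

/-- `L⁺(ψ,u) = −∫_{Ω_x} ψ ∂ₓu dx − Σ_i ψ⁺_{i-1/2}[u]_{i-1/2}`. -/
def Lplus {N : ℕ} (ψ u : PW N) : ℝ :=
  - inner2 ψ (fun i => derivative (u i)) - ∑ i : Fin N, uplus ψ i * jump u i

/-- `L⁻(ψ,u) = −∫_{Ω_x} ψ ∂ₓu dx − Σ_i ψ⁻_{i-1/2}[u]_{i-1/2}`. -/
def Lminus {N : ℕ} (ψ u : PW N) : ℝ :=
  - inner2 ψ (fun i => derivative (u i)) - ∑ i : Fin N, uminus ψ i * jump u i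

/-- The one-dimensional normalized Maxwellian `M(v) = (2π)^{-1/2} exp(-v²/2)`. -/
def Mw (v : ℝ) : ℝ := (Real.sqrt (2 * Real.pi))⁻¹ * Real.exp (-(v ^ 2) / 2)

/-- The coefficient data of a function of *discrete ansatz form*
`f(x,v) = M(v) Σ_{ℓ=0}^{N_v} c_ℓ(x) v^ℓ`, with each `c_ℓ` piecewise polynomial. -/
abbrev Ansatz (N Nv : ℕ) := Fin (Nv + 1) → PW N

/-- All coefficients of the ansatz belong to `V_h^k`. -/
def AdegLE (k : ℕ) {N Nv : ℕ} (c : Ansatz N Nv) : Prop := ∀ ℓ, degLE k (c ℓ)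

/-- For fixed velocity `v`, the element `f(·,v) ∈ V_h^k` of an ansatz-form function:
on cell `i` it is the polynomial `M(v) Σ_ℓ v^ℓ c_ℓ`. -/
def aAt {N Nv : ℕ} (c : Ansatz N Nv) (v : ℝ) : PW N :=
  fun i => Polynomial.C (Mw v) * ∑ ℓ : Fin (Nv + 1), Polynomial.C (v ^ (ℓ : ℕ)) * c ℓ i

/-- The squared weighted phase-space norm
`|||f|||² = ∫_{Ω_x} ∫_ℝ f(x,v)² (λ/M(v)) dv dx` of an ansatz-form function. -/
def nrmSq {N Nv : ℕ} (lam : ℝ) (c : Ansatz N Nv) : ℝ :=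
  ∑ i : Fin N,
    ∫ x in ((i.val : ℝ) * msize N)..(((i.val : ℝ) + 1) * msize N),
      ∫ v : ℝ, ((aAt c v i).eval x) ^ 2 * (lam / Mw v)

/-!
The constants `C_i`, `C_t` come from the inverse and trace inequalities on `V_h^k`, which give
`h² L⁻(ψ, u)² ≤ (C_i + 4 C_t²) ‖ψ‖² ‖u‖²`. At a fixed velocity, test the relaxation step with `j*`
and the transport step with `r*`: since `L⁻(ψ, u) = -L⁺(u, ψ)` the flux terms cancel, and what
remains is an energy identity with the dissipation `2λΔt/(1-ε²) ‖j*‖²` on the left and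
`‖r^{n+1} - r*‖²` on the right. Testing the transport step with the increment `r^{n+1} - r*` itself
bounds the latter by `(C_i + 4 C_t²) (Δt/h)² v² ‖j*‖²`.

After integration over `v` the factor `v²` is controlled by
`E[v² p²] ≤ 2 (2 N_v + 1) E[p²]` for polynomials `p` of degree at most `N_v` under the Gaussian
measure; integration by parts reduces this to `E[p'²] ≤ N_v E[p²]`, the spectral bound for the
Ornstein–Uhlenbeck operator on such polynomials, which follows by induction on the degree. The CFL
condition then lets the dissipation absorb the increment.
-/

/-! ### Gaussian moments of polynomials -/

theorem sq_map_mul_le {A : Type*} [CommRing A] [Algebra ℝ A] {Φ : A →ₗ[ℝ] ℝ}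
    (hΦ : ∀ a, 0 ≤ Φ (a ^ 2)) (a b : A) : Φ (a * b) ^ 2 ≤ Φ (a ^ 2) * Φ (b ^ 2) := by
  let B : LinearMap.BilinForm ℝ A := (LinearMap.mul ℝ A).compr₂ Φ
  have hB : ∀ x y, B x y = Φ (x * y) := fun _ _ => rfl
  have hpos (x : A) : 0 ≤ B x x := by rw [hB, ← sq]; exact hΦ x
  simpa only [hB, mul_comm b a, ← sq] using B.apply_mul_apply_le_of_forall_zero_le hpos a b

theorem le_of_sq_le_mul {x y : ℝ} (hy : 0 ≤ y) (h : x ^ 2 ≤ y * x) : x ≤ y := by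
  by_contra! hxy
  nlinarith

theorem Mw_pos (v : ℝ) : 0 < Mw v := by
  unfold Mw
  positivity

theorem hasDerivAt_Mw (v : ℝ) : HasDerivAt Mw (-v * Mw v) v := by
  have hexponent : HasDerivAt (fun v : ℝ => -(v ^ 2) / 2) (-v) v :=
    ((hasDerivAt_pow 2 v).neg.div_const 2).congr_deriv (by norm_num; ring)
  exact (hexponent.exp.const_mul _).congr_deriv (by unfold Mw; ring)

theorem integrable_eval_mul_Mw (p : ℝ[X]) : Integrable fun v : ℝ => p.eval v * Mw v := by
  induction p using Polynomial.induction_on' with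
  | add p q hp hq =>
    simp only [eval_add, add_mul]
    exact hp.add hq
  | monomial n a =>
    have hn : Integrable fun v : ℝ => v ^ (n : ℝ) * Real.exp (-(1 / 2) * v ^ 2) :=
      integrable_rpow_mul_exp_neg_mul_sq (by norm_num) (neg_one_lt_zero.trans_le n.cast_nonneg)
    refine (hn.const_mul (a * (Real.sqrt (2 * Real.pi))⁻¹)).congr (ae_of_all _ fun v => ?_)
    simp only [eval_monomial, Mw, Real.rpow_natCast,
      show -(1 / 2) * v ^ 2 = -(v ^ 2) / 2 by ring]
    ring

/-- The expectation `∫ p(v) M(v) dv` of a polynomial under the Maxwellian, as a linear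
functional. -/
def gaussianMean : ℝ[X] →ₗ[ℝ] ℝ where
  toFun p := ∫ v : ℝ, p.eval v * Mw v
  map_add' p q := by
    simp only [eval_add, add_mul]
    exact integral_add (integrable_eval_mul_Mw p) (integrable_eval_mul_Mw q)
  map_smul' a p := by
    simp only [eval_smul, smul_eq_mul, mul_assoc, RingHom.id_apply]
    exact integral_const_mul _ _

theorem gaussianMean_apply (p : ℝ[X]) : gaussianMean p = ∫ v : ℝ, p.eval v * Mw v := rfl

theorem gaussianMean_mono {p q : ℝ[X]} (h : ∀ v, p.eval v ≤ q.eval v) :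
    gaussianMean p ≤ gaussianMean q :=
  integral_mono (integrable_eval_mul_Mw p) (integrable_eval_mul_Mw q) fun v =>
    mul_le_mul_of_nonneg_right (h v) (Mw_pos v).le

theorem gaussianMean_sq_nonneg (p : ℝ[X]) : 0 ≤ gaussianMean (p ^ 2) := by
  rw [← map_zero gaussianMean]
  refine gaussianMean_mono fun v => ?_
  rw [eval_zero, eval_pow]
  positivity

theorem gaussianMean_X_mul (p : ℝ[X]) : gaussianMean (X * p) = gaussianMean (derivative p) := by
  have hderiv (v : ℝ) : HasDerivAt (fun v => p.eval v * Mw v)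
      ((derivative p - X * p).eval v * Mw v) v := by
    refine ((p.hasDerivAt v).mul (hasDerivAt_Mw v)).congr_deriv ?_
    simp only [eval_sub, eval_mul, eval_X]
    ring
  have hzero : gaussianMean (derivative p - X * p) = 0 :=
    integral_eq_zero_of_hasDerivAt_of_integrable hderiv
      (integrable_eval_mul_Mw _) (integrable_eval_mul_Mw p)
  rw [map_sub] at hzero
  linarith

/-- The Ornstein–Uhlenbeck operator `p ↦ v p' - p''` on polynomials, which represents the
Dirichlet form `E[p' q']` of the Gaussian measure. -/
def ornsteinUhlenbeck (p : ℝ[X]) : ℝ[X] := X * derivative p - derivative (derivative p)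

theorem gaussianMean_mul_ornsteinUhlenbeck (q p : ℝ[X]) :
    gaussianMean (q * ornsteinUhlenbeck p) = gaussianMean (derivative q * derivative p) := by
  have hparts := gaussianMean_X_mul (q * derivative p)
  rw [derivative_mul, map_add] at hparts
  rw [ornsteinUhlenbeck, mul_sub, map_sub, mul_left_comm, hparts, add_sub_cancel_right]

theorem derivative_ornsteinUhlenbeck (p : ℝ[X]) :
    derivative (ornsteinUhlenbeck p) = derivative p + ornsteinUhlenbeck (derivative p) := by
  simp only [ornsteinUhlenbeck, derivative_sub, derivative_mul, derivative_X]
  ring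

theorem gaussianMean_ornsteinUhlenbeck_sq (p : ℝ[X]) :
    gaussianMean (ornsteinUhlenbeck p ^ 2) =
      gaussianMean (derivative p ^ 2) + gaussianMean (derivative (derivative p) ^ 2) := by
  rw [sq, gaussianMean_mul_ornsteinUhlenbeck, derivative_ornsteinUhlenbeck, add_mul, map_add,
    mul_comm (ornsteinUhlenbeck _), gaussianMean_mul_ornsteinUhlenbeck, ← sq, ← sq]

theorem gaussianMean_derivative_sq_le {n : ℕ} {p : ℝ[X]} (hp : p.natDegree ≤ n) :
    gaussianMean (derivative p ^ 2) ≤ n * gaussianMean (p ^ 2) := by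
  induction n generalizing p with
  | zero => simp [derivative_of_natDegree_zero (Nat.le_zero.mp hp)]
  | succ n ih =>
    refine le_of_sq_le_mul (mul_nonneg (n + 1).cast_nonneg (gaussianMean_sq_nonneg p)) ?_
    calc gaussianMean (derivative p ^ 2) ^ 2
        = gaussianMean (p * ornsteinUhlenbeck p) ^ 2 := by
          rw [gaussianMean_mul_ornsteinUhlenbeck, ← sq (derivative p)]
      _ ≤ gaussianMean (p ^ 2) * gaussianMean (ornsteinUhlenbeck p ^ 2) :=
          sq_map_mul_le gaussianMean_sq_nonneg _ _
      _ ≤ gaussianMean (p ^ 2) * ((n + 1 : ℕ) * gaussianMean (derivative p ^ 2)) := by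
          refine mul_le_mul_of_nonneg_left ?_ (gaussianMean_sq_nonneg p)
          have hder := ih ((natDegree_derivative_le p).trans (Nat.sub_le_of_le_add hp))
          rw [gaussianMean_ornsteinUhlenbeck_sq]
          push_cast
          linarith
      _ = _ := by ring

theorem gaussianMean_X_mul_sq (p : ℝ[X]) :
    gaussianMean ((X * p) ^ 2) =
      gaussianMean (p ^ 2) + 2 * gaussianMean (X * p * derivative p) := by
  have hparts := gaussianMean_X_mul (X * p ^ 2)
  have hderiv : derivative (X * p ^ 2) = p ^ 2 + (2 : ℝ) • (X * p * derivative p) := by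
    rw [derivative_mul, derivative_X, derivative_sq, smul_eq_C_mul]
    ring
  rw [hderiv, map_add, map_smul, smul_eq_mul] at hparts
  rw [← hparts]
  ring_nf

theorem gaussianMean_X_mul_sq_le {n : ℕ} {p : ℝ[X]} (hp : p.natDegree ≤ n) :
    gaussianMean ((X * p) ^ 2) ≤ 2 * (2 * n + 1) * gaussianMean (p ^ 2) := by
  have hderiv := gaussianMean_derivative_sq_le hp
  have hyoung := gaussianMean_sq_nonneg (X * p - (2 : ℝ) • derivative p)
  have hexpand : (X * p - (2 : ℝ) • derivative p) ^ 2 =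
      (X * p) ^ 2 - (4 : ℝ) • (X * p * derivative p) + (4 : ℝ) • derivative p ^ 2 := by
    simp only [smul_eq_C_mul, map_ofNat]
    ring
  rw [hexpand, map_add, map_sub, map_smul, map_smul, smul_eq_mul, smul_eq_mul] at hyoung
  linarith [gaussianMean_X_mul_sq p]

/-! ### Inverse and trace inequalities -/

theorem exists_quadraticForm_le_norm_sq {E : Type*} [NormedAddCommGroup E] [NormedSpace ℝ E]
    [FiniteDimensional ℝ E] (R : QuadraticForm ℝ E) :
    ∃ K : ℝ, 0 < K ∧ ∀ x, R x ≤ K * ‖x‖ ^ 2 := by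
  let B := (QuadraticMap.associated R).toContinuousBilinearMap
  refine ⟨‖B‖ + 1, by positivity, fun x => ?_⟩
  calc R x = B x x := (QuadraticMap.associated_eq_self_apply ℝ R x).symm
    _ ≤ ‖B‖ * ‖x‖ * ‖x‖ := (le_abs_self _).trans (B.le_opNorm₂ x x)
    _ ≤ (‖B‖ + 1) * ‖x‖ ^ 2 := by nlinarith [sq_nonneg ‖x‖]

theorem exists_quadraticForm_le_posDef {E : Type*} [AddCommGroup E] [Module ℝ E]
    [FiniteDimensional ℝ E] {Q : QuadraticForm ℝ E} (hQ : Q.PosDef) (R : QuadraticForm ℝ E) :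
    ∃ K : ℝ, 0 < K ∧ ∀ x, R x ≤ K * Q x := by
  have hself (x : E) : QuadraticMap.associated Q x x = Q x :=
    QuadraticMap.associated_eq_self_apply ℝ Q x
  let core : InnerProductSpace.Core ℝ E :=
    { inner := fun x y => QuadraticMap.associated Q x y
      conj_inner_symm := fun x y => (QuadraticMap.associated_isSymm ℝ Q x y).symm
      re_inner_nonneg := fun x => (hQ.nonneg x).trans_eq (hself x).symm
      add_left := fun x y z => by simp only [map_add, LinearMap.add_apply]
      smul_left := fun x y r => by
        simp only [map_smul, LinearMap.smul_apply, smul_eq_mul, conj_trivial]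
      definite := fun x hx => hQ.anisotropic x ((hself x).symm.trans hx) }
  let _ : NormedAddCommGroup E := core.toNormedAddCommGroup
  let _ : InnerProductSpace ℝ E := .ofCore core.toCore
  have hnorm (x : E) : ‖x‖ ^ 2 = Q x := (real_inner_self_eq_norm_sq x).symm.trans (hself x)
  obtain ⟨K, hK, hle⟩ := exists_quadraticForm_le_norm_sq R
  exact ⟨K, hK, fun x => (hle x).trans_eq (by rw [hnorm])⟩

/-- The integral `∫ₐᵇ p(x) dx` of a polynomial, as a linear functional. -/
def polyIntegral (a b : ℝ) : ℝ[X] →ₗ[ℝ] ℝ where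
  toFun p := ∫ x in a..b, p.eval x
  map_add' p q := by
    simp only [eval_add]
    exact intervalIntegral.integral_add (p.continuous.intervalIntegrable a b)
      (q.continuous.intervalIntegrable a b)
  map_smul' c p := by
    simp only [eval_smul, smul_eq_mul, RingHom.id_apply]
    exact intervalIntegral.integral_const_mul _ _

theorem polyIntegral_apply (a b : ℝ) (p : ℝ[X]) :
    polyIntegral a b p = ∫ x in a..b, p.eval x := rfl

theorem polyIntegral_mono {a b : ℝ} (hab : a ≤ b) {p q : ℝ[X]} (h : ∀ x, p.eval x ≤ q.eval x) :
    polyIntegral a b p ≤ polyIntegral a b q :=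
  intervalIntegral.integral_mono hab (p.continuous.intervalIntegrable a b)
    (q.continuous.intervalIntegrable a b) h

theorem polyIntegral_derivative (a b : ℝ) (p : ℝ[X]) :
    polyIntegral a b (derivative p) = p.eval b - p.eval a :=
  intervalIntegral.integral_eq_sub_of_hasDerivAt (fun x _ => p.hasDerivAt x)
    ((derivative p).continuous.intervalIntegrable a b)

theorem polyIntegral_sq_pos {a b : ℝ} (hab : a < b) {p : ℝ[X]} (hp : p ≠ 0) :
    0 < polyIntegral a b (p ^ 2) := by
  obtain ⟨x, hx, hpx⟩ : ∃ x ∈ Set.Icc a b, p.eval x ≠ 0 := by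
    by_contra! h
    exact hp (eq_zero_of_infinite_isRoot p ((Set.Icc_infinite hab).mono h))
  simp only [polyIntegral_apply, eval_pow]
  exact intervalIntegral.integral_pos hab (by fun_prop) (fun _ _ => sq_nonneg _)
    ⟨x, hx, by positivity⟩

theorem polyIntegral_eq_mul_comp (a b : ℝ) (p : ℝ[X]) :
    polyIntegral a b p = (b - a) * polyIntegral 0 1 (p.comp (C (b - a) * X + C a)) := by
  simp only [polyIntegral_apply, eval_comp, eval_add, eval_mul, eval_C, eval_X]
  simpa using (intervalIntegral.mul_integral_comp_mul_add
    (a := 0) (b := 1) (f := fun x => p.eval x) (b - a) a).symm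

theorem exists_unit_inverse_trace_bound (k : ℕ) :
    ∃ K : ℝ, 0 < K ∧ ∀ p : ℝ[X], p.degree ≤ k →
      polyIntegral 0 1 (derivative p ^ 2) + (p.eval 0 ^ 2 + p.eval 1 ^ 2) ≤
        K * polyIntegral 0 1 (p ^ 2) := by
  let L : QuadraticForm ℝ ℝ[X] :=
    LinearMap.BilinMap.toQuadraticMap ((LinearMap.mul ℝ ℝ[X]).compr₂ (polyIntegral 0 1))
  have hL (p : ℝ[X]) : L p = polyIntegral 0 1 (p ^ 2) := by rw [sq]; rfl
  let ι := (degreeLE ℝ (k : WithBot ℕ)).subtype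
  have hfin : FiniteDimensional ℝ (degreeLE ℝ (k : WithBot ℕ)) := by
    rw [← degreeLT_succ_eq_degreeLE]
    exact .of_surjective _ (degreeLTEquiv ℝ (k + 1)).symm.surjective
  have hpos : (L.comp ι).PosDef := fun p hp => by
    rw [QuadraticMap.comp_apply, hL]
    exact polyIntegral_sq_pos zero_lt_one (by simpa [ι] using hp)
  obtain ⟨K, hK, hle⟩ := exists_quadraticForm_le_posDef hpos
    (L.comp (derivative ∘ₗ ι) + (QuadraticMap.sq.comp (leval 0 ∘ₗ ι) +
      QuadraticMap.sq.comp (leval 1 ∘ₗ ι)))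
  refine ⟨K, hK, fun p hp => ?_⟩
  simpa [hL, ι, ← sq] using hle ⟨p, mem_degreeLE.mpr hp⟩

theorem exists_inverse_trace_bound (k : ℕ) :
    ∃ K : ℝ, 0 < K ∧ ∀ p : ℝ[X], p.degree ≤ k → ∀ a b : ℝ, a ≤ b →
      (b - a) ^ 2 * polyIntegral a b (derivative p ^ 2) +
        (b - a) * (p.eval a ^ 2 + p.eval b ^ 2) ≤ K * polyIntegral a b (p ^ 2) := by
  obtain ⟨K, hK, hle⟩ := exists_unit_inverse_trace_bound k
  refine ⟨K, hK, fun p hp a b hab => ?_⟩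
  set φ := C (b - a) * X + C a
  have hdegree : (p.comp φ).degree ≤ k := by
    refine degree_le_of_natDegree_le (natDegree_comp_le.trans ?_)
    exact (Nat.mul_le_mul (natDegree_le_of_degree_le hp) natDegree_linear_le).trans (mul_one k).le
  have hderiv : derivative (p.comp φ) ^ 2 = (b - a) ^ 2 • (derivative p ^ 2).comp φ := by
    rw [derivative_comp, smul_eq_C_mul, pow_comp]
    simp [φ, mul_pow]
  have h := mul_le_mul_of_nonneg_left (hle _ hdegree) (sub_nonneg.mpr hab)
  rw [hderiv, map_smul, smul_eq_mul, ← pow_comp] at h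
  simp only [eval_comp, φ, eval_add, eval_mul, eval_C, eval_X, mul_zero, zero_add, mul_one,
    sub_add_cancel] at h
  rw [polyIntegral_eq_mul_comp a b (p ^ 2), polyIntegral_eq_mul_comp a b (derivative p ^ 2)]
  linarith

/-! ### The discontinuous Galerkin forms -/

section Mesh

variable {N : ℕ}

theorem msize_nonneg (N : ℕ) : 0 ≤ msize N := by
  unfold msize
  positivity

theorem msize_pos (hN : 0 < N) : 0 < msize N := by
  unfold msize
  positivity

theorem cell_length (i : Fin N) : ((i.val : ℝ) + 1) * msize N - i.val * msize N = msize N := by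
  ring

theorem cell_le (i : Fin N) : (i.val : ℝ) * msize N ≤ ((i.val : ℝ) + 1) * msize N :=
  sub_nonneg.mp ((cell_length i).symm ▸ msize_nonneg N)

theorem prevIdx_bijective (N : ℕ) : Function.Bijective (prevIdx (N := N)) := by
  cases N with
  | zero => exact ⟨fun i => i.elim0, fun i => i.elim0⟩
  | succ n => exact (Equiv.addRight (Fin.last n)).bijective

theorem sum_uminus_comp (F : ℝ → ℝ) (u : PW N) :
    ∑ i, F (uminus u i) = ∑ i : Fin N, F ((u i).eval (((i.val : ℝ) + 1) * msize N)) :=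
  (prevIdx_bijective N).sum_comp fun i => F ((u i).eval (((i.val : ℝ) + 1) * msize N))

/-- The integral over `Ω_x = [0,1]` of a piecewise polynomial, as a linear functional on the
algebra `PW N`; in terms of it, `inner2 u w = meshIntegral N (u * w)`. -/
def meshIntegral (N : ℕ) : PW N →ₗ[ℝ] ℝ :=
  ∑ i : Fin N, polyIntegral (i.val * msize N) ((i.val + 1) * msize N) ∘ₗ LinearMap.proj i

theorem meshIntegral_apply (u : PW N) :
    meshIntegral N u =
      ∑ i : Fin N, polyIntegral (i.val * msize N) ((i.val + 1) * msize N) (u i) := by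
  simp only [meshIntegral, LinearMap.sum_apply, LinearMap.comp_apply, LinearMap.proj_apply]

theorem meshIntegral_mono {u w : PW N} (h : ∀ i x, (u i).eval x ≤ (w i).eval x) :
    meshIntegral N u ≤ meshIntegral N w := by
  simp only [meshIntegral_apply]
  exact Finset.sum_le_sum fun i _ => polyIntegral_mono (cell_le i) (h i)

theorem meshIntegral_sq_nonneg (u : PW N) : 0 ≤ meshIntegral N (u ^ 2) := by
  rw [← map_zero (meshIntegral N)]
  exact meshIntegral_mono fun i x => by
    simpa only [Pi.zero_apply, Pi.pow_apply, eval_zero, eval_pow] using sq_nonneg _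

/-- The cellwise derivative `∂ₓu` of a piecewise polynomial. -/
def cellDeriv (u : PW N) : PW N := fun i => derivative (u i)

theorem cellDeriv_mul (u w : PW N) : cellDeriv (u * w) = cellDeriv u * w + u * cellDeriv w :=
  funext fun _ => derivative_mul

theorem meshIntegral_cellDeriv (u : PW N) : meshIntegral N (cellDeriv u) = -∑ i, jump u i := by
  simp only [meshIntegral_apply, cellDeriv, polyIntegral_derivative, jump, Finset.sum_sub_distrib,
    neg_sub, uplus]
  rw [sum_uminus_comp (fun t => t) u]

theorem inner2_eq_meshIntegral (u w : PW N) : inner2 u w = meshIntegral N (u * w) := by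
  simp only [meshIntegral_apply, polyIntegral_apply, inner2, Pi.mul_apply, eval_mul]

theorem inner2_self_eq_meshIntegral (u : PW N) : inner2 u u = meshIntegral N (u ^ 2) := by
  rw [inner2_eq_meshIntegral, sq]

theorem inner2_self_nonneg (u : PW N) : 0 ≤ inner2 u u :=
  inner2_self_eq_meshIntegral u ▸ meshIntegral_sq_nonneg u

theorem inner2_sq_le (u w : PW N) : inner2 u w ^ 2 ≤ inner2 u u * inner2 w w := by
  simpa only [inner2_eq_meshIntegral, ← sq] using sq_map_mul_le meshIntegral_sq_nonneg u w

theorem inner2_comm (u w : PW N) : inner2 u w = inner2 w u := by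
  simp only [inner2_eq_meshIntegral, mul_comm]

theorem inner2_sub_left (u w z : PW N) : inner2 (u - w) z = inner2 u z - inner2 w z := by
  simp only [inner2_eq_meshIntegral, sub_mul, map_sub]

theorem inner2_sub_right (u w z : PW N) : inner2 z (u - w) = inner2 z u - inner2 z w := by
  simp only [inner2_eq_meshIntegral, mul_sub, map_sub]

theorem inner2_cellDeriv_add (u w : PW N) :
    inner2 u (cellDeriv w) + inner2 w (cellDeriv u) = -∑ i, jump (u * w) i := by
  rw [← meshIntegral_cellDeriv, cellDeriv_mul, map_add, mul_comm (cellDeriv u), add_comm]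
  simp only [inner2_eq_meshIntegral]

theorem jump_mul (u w : PW N) (i : Fin N) :
    jump (u * w) i = uminus u i * jump w i + uplus w i * jump u i := by
  simp only [jump, uplus, uminus, Pi.mul_apply, eval_mul]
  ring

theorem Lplus_eq (u w : PW N) :
    Lplus u w = -inner2 u (cellDeriv w) - ∑ i, uplus u i * jump w i := rfl

theorem Lminus_eq (u w : PW N) :
    Lminus u w = -inner2 u (cellDeriv w) - ∑ i, uminus u i * jump w i := rfl

theorem Lminus_eq_neg_Lplus (u w : PW N) : Lminus u w = -Lplus w u := by
  have hparts := inner2_cellDeriv_add u w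
  simp only [jump_mul, Finset.sum_add_distrib] at hparts
  rw [Lminus_eq, Lplus_eq]
  linarith

theorem degLE.sub {k : ℕ} {u w : PW N} (hu : degLE k u) (hw : degLE k w) : degLE k (u - w) :=
  fun i => (degree_sub_le _ _).trans (max_le (hu i) (hw i))

theorem sum_jump_sq_le (u : PW N) :
    ∑ i, jump u i ^ 2 ≤ 2 * ∑ i, (uplus u i ^ 2 + uminus u i ^ 2) := by
  rw [Finset.mul_sum]
  refine Finset.sum_le_sum fun i _ => ?_
  rw [jump]
  linarith [sq_nonneg (uplus u i + uminus u i)]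

theorem sq_inner2_cellDeriv_le {K : ℝ} {g w : PW N}
    (hw : msize N ^ 2 * inner2 (cellDeriv w) (cellDeriv w) ≤ K * inner2 w w) :
    msize N ^ 2 * inner2 g (cellDeriv w) ^ 2 ≤ K * (inner2 g g * inner2 w w) :=
  calc msize N ^ 2 * inner2 g (cellDeriv w) ^ 2
      ≤ msize N ^ 2 * (inner2 g g * inner2 (cellDeriv w) (cellDeriv w)) := by
        gcongr
        exact inner2_sq_le g (cellDeriv w)
    _ = inner2 g g * (msize N ^ 2 * inner2 (cellDeriv w) (cellDeriv w)) := by ring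
    _ ≤ inner2 g g * (K * inner2 w w) := mul_le_mul_of_nonneg_left hw (inner2_self_nonneg g)
    _ = K * (inner2 g g * inner2 w w) := by ring

theorem sq_sum_uminus_mul_jump_le {K : ℝ} {g w : PW N}
    (hg : msize N * ∑ i, (uplus g i ^ 2 + uminus g i ^ 2) ≤ K * inner2 g g)
    (hw : msize N * ∑ i, (uplus w i ^ 2 + uminus w i ^ 2) ≤ K * inner2 w w) :
    msize N ^ 2 * (∑ i, uminus g i * jump w i) ^ 2 ≤ 2 * K ^ 2 * (inner2 g g * inner2 w w) := by
  have hh := msize_nonneg N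
  have hminus : msize N * ∑ i, uminus g i ^ 2 ≤ K * inner2 g g :=
    hg.trans' <| mul_le_mul_of_nonneg_left
      (Finset.sum_le_sum fun i _ => le_add_of_nonneg_left (sq_nonneg _)) hh
  have hjump : msize N * ∑ i, jump w i ^ 2 ≤ 2 * (K * inner2 w w) := by
    linarith [mul_le_mul_of_nonneg_left (sum_jump_sq_le w) hh]
  calc msize N ^ 2 * (∑ i, uminus g i * jump w i) ^ 2
      ≤ msize N ^ 2 * ((∑ i, uminus g i ^ 2) * ∑ i, jump w i ^ 2) := by
        gcongr
        exact Finset.sum_mul_sq_le_sq_mul_sq _ _ _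
    _ = (msize N * ∑ i, uminus g i ^ 2) * (msize N * ∑ i, jump w i ^ 2) := by ring
    _ ≤ (K * inner2 g g) * (2 * (K * inner2 w w)) :=
        mul_le_mul hminus hjump (by positivity) (hminus.trans' (by positivity))
    _ = 2 * K ^ 2 * (inner2 g g * inner2 w w) := by ring

end Mesh

theorem exists_mesh_inverse_trace_bound (k : ℕ) :
    ∃ K : ℝ, 0 < K ∧ ∀ (N : ℕ) (u : PW N), degLE k u →
      msize N ^ 2 * inner2 (cellDeriv u) (cellDeriv u) ≤ K * inner2 u u ∧
        msize N * ∑ i, (uplus u i ^ 2 + uminus u i ^ 2) ≤ K * inner2 u u := by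
  obtain ⟨K, hK, hle⟩ := exists_inverse_trace_bound k
  refine ⟨K, hK, fun N u hu => ?_⟩
  have hsum : msize N ^ 2 * inner2 (cellDeriv u) (cellDeriv u) +
      msize N * ∑ i, (uplus u i ^ 2 + uminus u i ^ 2) ≤ K * inner2 u u := by
    have hcells := Finset.sum_le_sum fun (i : Fin N) (_ : i ∈ Finset.univ) =>
      hle (u i) (hu i) _ _ (cell_le i)
    simp only [cell_length, Finset.sum_add_distrib, ← Finset.mul_sum] at hcells
    rw [Finset.sum_add_distrib, sum_uminus_comp (fun t => t ^ 2) u]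
    simpa only [inner2_self_eq_meshIntegral, meshIntegral_apply, Pi.pow_apply, cellDeriv, uplus]
      using hcells
  have hinterior := mul_nonneg (sq_nonneg (msize N)) (inner2_self_nonneg (cellDeriv u))
  have htrace : 0 ≤ msize N * ∑ i, (uplus u i ^ 2 + uminus u i ^ 2) :=
    mul_nonneg (msize_nonneg N) (Finset.sum_nonneg fun i _ => by positivity)
  constructor <;> linarith

theorem exists_Lminus_sq_le (k : ℕ) :
    ∃ Ci Ct : ℝ, 0 < Ci ∧ 0 < Ct ∧ ∀ (N : ℕ) (g w : PW N), degLE k g → degLE k w →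
      msize N ^ 2 * Lminus g w ^ 2 ≤ (Ci + 4 * Ct ^ 2) * (inner2 g g * inner2 w w) := by
  obtain ⟨K, hK, hle⟩ := exists_mesh_inverse_trace_bound k
  refine ⟨2 * K, K, by positivity, hK, fun N g w hg hw => ?_⟩
  have hvolume := sq_inner2_cellDeriv_le (g := g) (hle N w hw).1
  have hface := sq_sum_uminus_mul_jump_le (hle N g hg).2 (hle N w hw).2
  have hsplit : Lminus g w ^ 2 ≤
      2 * (inner2 g (cellDeriv w) ^ 2 + (∑ i, uminus g i * jump w i) ^ 2) := by
    rw [Lminus_eq, ← neg_add', neg_sq]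
    exact add_sq_le
  linarith [mul_le_mul_of_nonneg_left hsplit (sq_nonneg (msize N))]

/-! ### The half steps at a fixed velocity -/

section FixedVelocity

variable {k N : ℕ} {ε lam Δt v : ℝ} {rs jn js rn1 : PW N}

/-- The relaxation half step at velocity `v`, in weak form with test space `V_h^k`: it
determines `js` (that is, `j*`) from `rs` (that is, `r*`) and `jn` (that is, `jⁿ`). -/
def RelaxationStep (k : ℕ) (ε lam Δt v : ℝ) (rs jn js : PW N) : Prop :=
  ∀ η : PW N, degLE k η →
    Δt⁻¹ * inner2 (js - jn) η =
      -(lam / ε ^ 2) * inner2 js η - ((1 - ε ^ 2) / ε ^ 2) * v * Lplus rs η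

/-- The transport half step at velocity `v`, in weak form with test space `V_h^k`: it
determines `rn1` (that is, `r^{n+1}`) from `rs` and `js`. -/
def TransportStep (k : ℕ) (Δt v : ℝ) (rs js rn1 : PW N) : Prop :=
  ∀ ξ : PW N, degLE k ξ → Δt⁻¹ * inner2 (rn1 - rs) ξ + v * Lminus js ξ = 0

theorem RelaxationStep.inner2_eq (h : RelaxationStep k ε lam Δt v rs jn js) (hε : 0 < ε)
    (hε1 : ε < 1) (hΔt : 0 < Δt) {η : PW N} (hη : degLE k η) :
    ε ^ 2 / (1 - ε ^ 2) * inner2 (js - jn) η + lam * Δt / (1 - ε ^ 2) * inner2 js η =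
      -(Δt * v * Lplus rs η) := by
  have hgap : 0 < 1 - ε ^ 2 := sub_pos.mpr (pow_lt_one₀ hε.le hε1 two_ne_zero)
  have heq := h η hη
  field_simp at heq ⊢
  linarith

theorem TransportStep.inner2_eq (h : TransportStep k Δt v rs js rn1) (hΔt : 0 < Δt) {ξ : PW N}
    (hξ : degLE k ξ) : inner2 (rn1 - rs) ξ = -(Δt * v * Lminus js ξ) := by
  have heq := h ξ hξ
  field_simp at heq
  linarith

theorem energy_identity (hrel : RelaxationStep k ε lam Δt v rs jn js)
    (htr : TransportStep k Δt v rs js rn1) (hε : 0 < ε) (hε1 : ε < 1) (hΔt : 0 < Δt)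
    (hrs : degLE k rs) (hjs : degLE k js) :
    inner2 rn1 rn1 + ε ^ 2 / (1 - ε ^ 2) * inner2 js js +
        2 * lam * Δt / (1 - ε ^ 2) * inner2 js js +
        ε ^ 2 / (1 - ε ^ 2) * inner2 (js - jn) (js - jn) =
      inner2 rs rs + ε ^ 2 / (1 - ε ^ 2) * inner2 jn jn + inner2 (rn1 - rs) (rn1 - rs) := by
  have hj := hrel.inner2_eq hε hε1 hΔt hjs
  have hr := htr.inner2_eq hΔt hrs
  rw [Lminus_eq_neg_Lplus] at hr
  simp only [inner2_sub_left, inner2_sub_right, inner2_comm js jn, inner2_comm rn1 rs] at hj hr ⊢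
  linear_combination 2 * hj + 2 * hr

theorem TransportStep.increment_sq_le (h : TransportStep k Δt v rs js rn1) (hΔt : 0 < Δt)
    (hrs : degLE k rs) (hrn1 : degLE k rn1) {D : ℝ} (hD : 0 ≤ D)
    (hLminus : msize N ^ 2 * Lminus js (rn1 - rs) ^ 2 ≤
      D * (inner2 js js * inner2 (rn1 - rs) (rn1 - rs))) :
    msize N ^ 2 * inner2 (rn1 - rs) (rn1 - rs) ≤ D * (Δt * v) ^ 2 * inner2 js js := by
  have hjj := inner2_self_nonneg js
  refine le_of_sq_le_mul (by positivity) ?_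
  calc (msize N ^ 2 * inner2 (rn1 - rs) (rn1 - rs)) ^ 2
      = msize N ^ 2 * (Δt * v) ^ 2 * (msize N ^ 2 * Lminus js (rn1 - rs) ^ 2) := by
        rw [h.inner2_eq hΔt (hrn1.sub hrs)]
        ring
    _ ≤ msize N ^ 2 * (Δt * v) ^ 2 *
          (D * (inner2 js js * inner2 (rn1 - rs) (rn1 - rs))) :=
        mul_le_mul_of_nonneg_left hLminus (by positivity)
    _ = D * (Δt * v) ^ 2 * inner2 js js * (msize N ^ 2 * inner2 (rn1 - rs) (rn1 - rs)) := by
        ring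

theorem energy_le_at_velocity (hrel : RelaxationStep k ε lam Δt v rs jn js)
    (htr : TransportStep k Δt v rs js rn1) (hN : 0 < N) (hε : 0 < ε) (hε1 : ε < 1)
    (hΔt : 0 < Δt) (hrs : degLE k rs) (hjs : degLE k js) (hrn1 : degLE k rn1) {D : ℝ}
    (hD : 0 ≤ D)
    (hLminus : msize N ^ 2 * Lminus js (rn1 - rs) ^ 2 ≤
      D * (inner2 js js * inner2 (rn1 - rs) (rn1 - rs))) :
    inner2 rn1 rn1 + ε ^ 2 / (1 - ε ^ 2) * inner2 js js +
        2 * lam * Δt / (1 - ε ^ 2) * inner2 js js ≤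
      inner2 rs rs + ε ^ 2 / (1 - ε ^ 2) * inner2 jn jn +
        D * Δt ^ 2 / msize N ^ 2 * v ^ 2 * inner2 js js := by
  have hidentity := energy_identity hrel htr hε hε1 hΔt hrs hjs
  have hgap : 0 < 1 - ε ^ 2 := sub_pos.mpr (pow_lt_one₀ hε.le hε1 two_ne_zero)
  have hjump : 0 ≤ ε ^ 2 / (1 - ε ^ 2) * inner2 (js - jn) (js - jn) :=
    mul_nonneg (by positivity) (inner2_self_nonneg _)
  have hincrement : inner2 (rn1 - rs) (rn1 - rs) ≤
      D * Δt ^ 2 / msize N ^ 2 * v ^ 2 * inner2 js js := by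
    have hh := msize_pos hN
    have hle := htr.increment_sq_le hΔt hrs hrn1 hD hLminus
    rw [mul_comm, ← le_div_iff₀ (by positivity)] at hle
    exact hle.trans_eq (by ring)
  linarith

end FixedVelocity

/-! ### Integration over velocity -/

section Velocity

variable {k N Nv : ℕ}

/-- The polynomial `v ↦ f(x, v) / M(v)` for the ansatz function `f` with coefficients `c` and
`x` in cell `i`. -/
def velocityPoly (c : Ansatz N Nv) (i : Fin N) (x : ℝ) : ℝ[X] :=
  ∑ ℓ, C ((c ℓ i).eval x) * X ^ (ℓ : ℕ)

theorem natDegree_velocityPoly_le (c : Ansatz N Nv) (i : Fin N) (x : ℝ) :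
    (velocityPoly c i x).natDegree ≤ Nv :=
  natDegree_sum_le_of_forall_le _ _ fun ℓ _ =>
    (natDegree_C_mul_X_pow_le _ _).trans (Nat.le_of_lt_succ ℓ.isLt)

theorem eval_aAt (c : Ansatz N Nv) (v : ℝ) (i : Fin N) (x : ℝ) :
    (aAt c v i).eval x = Mw v * (velocityPoly c i x).eval v := by
  simp only [aAt, velocityPoly, eval_mul, eval_C, eval_finsetSum, eval_pow, eval_X, mul_comm]

theorem degLE_aAt {c : Ansatz N Nv} (hc : AdegLE k c) (v : ℝ) : degLE k (aAt c v) := fun i => by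
  simp only [aAt, ← smul_eq_C_mul]
  exact mem_degreeLE.mp <| Submodule.smul_mem _ _ <| Submodule.sum_mem _ fun ℓ _ =>
    Submodule.smul_mem _ _ (mem_degreeLE.mpr (hc ℓ i))

/-- For a linear functional `Φ` in the velocity variable, the piecewise polynomial
`x ↦ Φ ((f(x, ·) / M)²)`, where `f` is the ansatz function with coefficients `c`. -/
def sqMoment (Φ : ℝ[X] →ₗ[ℝ] ℝ) (c : Ansatz N Nv) : PW N :=
  ∑ ℓ, ∑ m, Φ (X ^ (ℓ.val + m.val)) • (c ℓ * c m)

theorem eval_sqMoment (Φ : ℝ[X] →ₗ[ℝ] ℝ) (c : Ansatz N Nv) (i : Fin N) (x : ℝ) :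
    (sqMoment Φ c i).eval x = Φ (velocityPoly c i x ^ 2) := by
  have hmonomials (a b : ℝ) (ℓ m : ℕ) :
      C a * X ^ ℓ * (C b * X ^ m) = (a * b) • (X : ℝ[X]) ^ (ℓ + m) := by
    rw [smul_eq_C_mul, C_mul, pow_add]
    ring
  simp only [sqMoment, velocityPoly, Finset.sum_apply, Pi.smul_apply, Pi.mul_apply,
    eval_finsetSum, eval_smul, eval_mul, sq, Finset.sum_mul_sum, hmonomials, map_sum, map_smul,
    smul_eq_mul]
  simp only [mul_comm]

/-- The polynomial `v ↦ ∫_{Ω_x} (f(x, v) / M(v))² dx` for the ansatz function `f` with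
coefficients `c`. -/
def energyPoly (c : Ansatz N Nv) : ℝ[X] :=
  ∑ ℓ, ∑ m, inner2 (c ℓ) (c m) • X ^ (ℓ.val + m.val)

theorem meshIntegral_sqMoment (Φ : ℝ[X] →ₗ[ℝ] ℝ) (c : Ansatz N Nv) :
    meshIntegral N (sqMoment Φ c) = Φ (energyPoly c) := by
  simp only [sqMoment, energyPoly, map_sum, map_smul, smul_eq_mul, inner2_eq_meshIntegral,
    mul_comm]

theorem inner2_aAt_self (c : Ansatz N Nv) (v : ℝ) :
    inner2 (aAt c v) (aAt c v) = Mw v ^ 2 * (energyPoly c).eval v := by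
  have hsq : aAt c v ^ 2 = Mw v ^ 2 • sqMoment (leval v) c := by
    funext i
    refine Polynomial.funext fun x => ?_
    rw [Pi.pow_apply, eval_pow, eval_aAt, mul_pow, Pi.smul_apply, eval_smul, eval_sqMoment,
      leval_apply, eval_pow, smul_eq_mul]
  rw [inner2_self_eq_meshIntegral, hsq, map_smul, meshIntegral_sqMoment, leval_apply, smul_eq_mul]

theorem nrmSq_eq (lam : ℝ) (c : Ansatz N Nv) :
    nrmSq lam c = lam * gaussianMean (energyPoly c) := by
  have hvelocity (i : Fin N) (x : ℝ) :
      ∫ v : ℝ, (aAt c v i).eval x ^ 2 * (lam / Mw v) =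
        lam * (sqMoment gaussianMean c i).eval x := by
    rw [eval_sqMoment, gaussianMean_apply, ← integral_const_mul]
    congr 1
    funext v
    have := (Mw_pos v).ne'
    rw [eval_aAt, eval_pow]
    field_simp
  simp only [nrmSq, hvelocity, intervalIntegral.integral_const_mul, ← Finset.mul_sum]
  rw [← meshIntegral_sqMoment, meshIntegral_apply]
  simp only [polyIntegral_apply]

theorem gaussianMean_energyPoly_nonneg (c : Ansatz N Nv) : 0 ≤ gaussianMean (energyPoly c) := by
  rw [← meshIntegral_sqMoment, ← map_zero (meshIntegral N)]
  refine meshIntegral_mono fun i x => ?_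
  rw [Pi.zero_apply, eval_zero, eval_sqMoment]
  exact gaussianMean_sq_nonneg _

theorem gaussianMean_X_sq_mul_energyPoly_le (c : Ansatz N Nv) :
    gaussianMean (X ^ 2 * energyPoly c) ≤
      2 * (2 * Nv + 1) * gaussianMean (energyPoly c) := by
  have hle := meshIntegral_mono
    (u := sqMoment (gaussianMean ∘ₗ LinearMap.mulLeft ℝ (X ^ 2)) c)
    (w := (2 * (2 * Nv + 1) : ℝ) • sqMoment gaussianMean c) fun i x => by
      simp only [Pi.smul_apply, eval_smul, smul_eq_mul, eval_sqMoment, LinearMap.comp_apply,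
        LinearMap.mulLeft_apply, ← mul_pow]
      exact gaussianMean_X_mul_sq_le (natDegree_velocityPoly_le c i x)
  simpa only [map_smul, meshIntegral_sqMoment, smul_eq_mul, LinearMap.comp_apply,
    LinearMap.mulLeft_apply] using hle

theorem gaussianMean_energy_le {Nj Nr Nr' : ℕ} {ε lam Δt : ℝ} {rs : Ansatz N Nr}
    {jn : Ansatz N Nj} {js : Ansatz N Nv} {rn1 : Ansatz N Nr'} (hN : 0 < N) (hε : 0 < ε)
    (hε1 : ε < 1) (hΔt : 0 < Δt) (hrs : AdegLE k rs) (hjs : AdegLE k js) (hrn1 : AdegLE k rn1)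
    (hrel : ∀ v, RelaxationStep k ε lam Δt v (aAt rs v) (aAt jn v) (aAt js v))
    (htr : ∀ v, TransportStep k Δt v (aAt rs v) (aAt js v) (aAt rn1 v)) {D : ℝ} (hD : 0 ≤ D)
    (hLminus : ∀ g w : PW N, degLE k g → degLE k w →
      msize N ^ 2 * Lminus g w ^ 2 ≤ D * (inner2 g g * inner2 w w)) :
    gaussianMean (energyPoly rn1) + ε ^ 2 / (1 - ε ^ 2) * gaussianMean (energyPoly js) +
        2 * lam * Δt / (1 - ε ^ 2) * gaussianMean (energyPoly js) ≤
      gaussianMean (energyPoly rs) + ε ^ 2 / (1 - ε ^ 2) * gaussianMean (energyPoly jn) +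
        D * Δt ^ 2 / msize N ^ 2 * gaussianMean (X ^ 2 * energyPoly js) := by
  simp only [← smul_eq_mul, ← map_smul, ← map_add]
  refine gaussianMean_mono fun v => le_of_mul_le_mul_left ?_ (pow_pos (Mw_pos v) 2)
  have hle := energy_le_at_velocity (hrel v) (htr v) hN hε hε1 hΔt (degLE_aAt hrs v)
    (degLE_aAt hjs v) (degLE_aAt hrn1 v) hD
    (hLminus _ _ (degLE_aAt hjs v) ((degLE_aAt hrn1 v).sub (degLE_aAt hrs v)))
  simp only [inner2_aAt_self] at hle
  simp only [eval_add, eval_smul, eval_mul, eval_pow, eval_X, smul_eq_mul]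
  linarith

end Velocity

theorem transport_coeff_le_relaxation_coeff {τ h D gap lam m : ℝ} (hτ : 0 < τ) (hD : 0 < D)
    (hgap : 0 < gap) (hm : 0 < m) (hCFL : τ / h ^ 2 ≤ lam / (gap * D * m)) :
    D * τ ^ 2 / h ^ 2 * (2 * m) ≤ 2 * lam * τ / gap :=
  calc D * τ ^ 2 / h ^ 2 * (2 * m) = 2 * D * τ * m * (τ / h ^ 2) := by ring
    _ ≤ 2 * D * τ * m * (lam / (gap * D * m)) := by gcongr
    _ = 2 * lam * τ / gap := by field_simp

theorem relaxation_transport_energy_estimate_general (k : ℕ) :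
    ∃ Ci Ct : ℝ, 0 < Ci ∧ 0 < Ct ∧
      ∀ (Nv Nj Nr Nr' N : ℕ), 0 < N → ∀ (ε lam Δt : ℝ), 0 < ε → ε < 1 → 0 < lam → 0 < Δt →
      ∀ (rs : Ansatz N Nr) (jn : Ansatz N Nj) (js : Ansatz N Nv) (rn1 : Ansatz N Nr'),
        AdegLE k rs → AdegLE k js → AdegLE k rn1 →
        (∀ v, RelaxationStep k ε lam Δt v (aAt rs v) (aAt jn v) (aAt js v)) →
        (∀ v, TransportStep k Δt v (aAt rs v) (aAt js v) (aAt rn1 v)) →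
        Δt / msize N ^ 2 ≤ lam / ((1 - ε ^ 2) * (Ci + 4 * Ct ^ 2) * (2 * Nv + 1)) →
        nrmSq lam rn1 + ε ^ 2 / (1 - ε ^ 2) * nrmSq lam js ≤
          nrmSq lam rs + ε ^ 2 / (1 - ε ^ 2) * nrmSq lam jn := by
  obtain ⟨Ci, Ct, hCi, hCt, hLminus⟩ := exists_Lminus_sq_le k
  refine ⟨Ci, Ct, hCi, hCt, fun Nv Nj Nr Nr' N hN ε lam Δt hε hε1 hlam hΔt rs jn js rn1
    hrs hjs hrn1 hrel htr hCFL => ?_⟩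
  have hD : 0 < Ci + 4 * Ct ^ 2 := by positivity
  have hgap : 0 < 1 - ε ^ 2 := sub_pos.mpr (pow_lt_one₀ hε.le hε1 two_ne_zero)
  have henergy := gaussianMean_energy_le hN hε hε1 hΔt hrs hjs hrn1 hrel htr hD.le (hLminus N)
  have hcoeff := transport_coeff_le_relaxation_coeff hΔt hD hgap (by positivity) hCFL
  have habsorb : (Ci + 4 * Ct ^ 2) * Δt ^ 2 / msize N ^ 2 * gaussianMean (X ^ 2 * energyPoly js) ≤
      2 * lam * Δt / (1 - ε ^ 2) * gaussianMean (energyPoly js) :=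
    calc _ ≤ (Ci + 4 * Ct ^ 2) * Δt ^ 2 / msize N ^ 2 *
            (2 * (2 * Nv + 1) * gaussianMean (energyPoly js)) := by
          gcongr
          exact gaussianMean_X_sq_mul_energyPoly_le js
      _ ≤ 2 * lam * Δt / (1 - ε ^ 2) * gaussianMean (energyPoly js) := by
          rw [← mul_assoc]
          exact mul_le_mul_of_nonneg_right hcoeff (gaussianMean_energyPoly_nonneg js)
  have hscaled := mul_le_mul_of_nonneg_left (henergy.trans (add_le_add_right habsorb _)) hlam.le
  simp only [nrmSq_eq]
  linarith

/-- **Lemma 4.3: energy estimate for the relaxation–transport half steps.**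
For every `k` there exist positive constants `C_i, C_t` depending only on `k` such that,
for all data of discrete ansatz form satisfying the relaxation step for `j*` and the
forward-Euler transport step for `r^{n+1}`, under the CFL condition
`Δt/h² ≤ λ/((1−ε²)(C_i + 4C_t²)(2N_v+1))` one has
`|||r^{n+1}|||² + (ε²/(1−ε²))|||j*|||² ≤ |||r*|||² + (ε²/(1−ε²))|||jⁿ|||²`. -/
theorem relaxation_transport_energy_estimate (k : ℕ) :
    ∃ Ci Ct : ℝ, 0 < Ci ∧ 0 < Ct ∧
      ∀ (Nv N : ℕ), 0 < N → ∀ (ε lam Δt : ℝ), 0 < ε → ε < 1 → 0 < lam → 0 < Δt →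
      ∀ (rs jn js rn1 : Ansatz N Nv),
        AdegLE k rs → AdegLE k jn → AdegLE k js → AdegLE k rn1 →
        -- (i) relaxation step for the odd parity:
        -- ((j* − jⁿ)/Δt, η) = −(λ/ε²)(j*, η) − ((1−ε²)/ε²)·v·L⁺(r*, η) for all η ∈ V_h^k
        (∀ v : ℝ, ∀ η : PW N, degLE k η →
          Δt⁻¹ * inner2 (fun i => aAt js v i - aAt jn v i) η =
            -(lam / ε ^ 2) * inner2 (aAt js v) η
              - ((1 - ε ^ 2) / ε ^ 2) * v * Lplus (aAt rs v) η) →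
        -- (ii) transport step for the even parity:
        -- ((r^{n+1} − r*)/Δt, ξ) + v·L⁻(j*, ξ) = 0 for all ξ ∈ V_h^k
        (∀ v : ℝ, ∀ ξ : PW N, degLE k ξ →
          Δt⁻¹ * inner2 (fun i => aAt rn1 v i - aAt rs v i) ξ
            + v * Lminus (aAt js v) ξ = 0) →
        -- CFL condition
        Δt / (msize N) ^ 2 ≤ lam / ((1 - ε ^ 2) * (Ci + 4 * Ct ^ 2) * (2 * (Nv : ℝ) + 1)) →
        nrmSq lam rn1 + ε ^ 2 / (1 - ε ^ 2) * nrmSq lam js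
          ≤ nrmSq lam rs + ε ^ 2 / (1 - ε ^ 2) * nrmSq lam jn := by
  obtain ⟨Ci, Ct, hCi, hCt, hle⟩ := relaxation_transport_energy_estimate_general k
  exact ⟨Ci, Ct, hCi, hCt, fun Nv N hN ε lam Δt hε hε1 hlam hΔt rs jn js rn1 hrs _ hjs hrn1 =>
    hle Nv Nv Nv Nv N hN ε lam Δt hε hε1 hlam hΔt rs jn js rn1 hrs hjs hrn1⟩

end APDG
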